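/- For every k, the sequence 0 → A^k → B^k → H^k_∂̄ → H^k_A → C^k → 0 is exact, where A^k → B^k and B^k → H^k_∂̄ are induced by the inclusions of representatives, H^k_∂̄ → H^k_A is induced by the identity on representatives, and H^k_A → C^k is induced by the quotient projection on representatives (Varouchas exact sequence). -/

import Mathlib

open Submodule LinearMap Module

section Setup

variable (U : ℤ → Type*) [∀ k, AddCommGroup (U k)] [∀ k, Module ℂ (U k)]

/-- The identification `U a → U b` induced by an equality `a = b` of degrees. -/
def castU {a b : ℤ} (h : a = b) : U a →ₗ[ℂ] U b := by subst h; exact LinearMap.id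

variable (D : ∀ k : ℤ, U k →ₗ[ℂ] U (k + 1)) (Db : ∀ k : ℤ, U k →ₗ[ℂ] U (k - 1))

/-- The composite `∂∂̄ : U^k → U^{k-1} → U^k`. -/
def ddbar (k : ℤ) : U k →ₗ[ℂ] U k :=
  (castU U (show k - 1 + 1 = k by ring)).comp ((D (k - 1)).comp (Db k))

/-- `ker ∂ ∩ U^k` -/
def kerD (k : ℤ) : Submodule ℂ (U k) := LinearMap.ker (D k)

/-- `ker ∂̄ ∩ U^k` -/
def kerDb (k : ℤ) : Submodule ℂ (U k) := LinearMap.ker (Db k)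

/-- `∂(U^{k-1})` -/
def imD (k : ℤ) : Submodule ℂ (U k) :=
  LinearMap.range ((castU U (show k - 1 + 1 = k by ring)).comp (D (k - 1)))

/-- `∂̄(U^{k+1})` -/
def imDb (k : ℤ) : Submodule ℂ (U k) :=
  LinearMap.range ((castU U (show k + 1 - 1 = k by ring)).comp (Db (k + 1)))

/-- `ker (∂∂̄) ∩ U^k` -/
def kerDDbar (k : ℤ) : Submodule ℂ (U k) := LinearMap.ker (ddbar U D Db k)

/-- `(∂∂̄)(U^k)` -/
def imDDbar (k : ℤ) : Submodule ℂ (U k) := LinearMap.range (ddbar U D Db k)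

end Setup

/-- The quotient of a submodule `p` by (the preimage in `p` of) a submodule `q`. -/
abbrev SubQuot {V : Type*} [AddCommGroup V] [Module ℂ V] (p q : Submodule ℂ V) :=
  ↥p ⧸ q.comap p.subtype

/-- The map `p/q → p'/q'` induced by the identity (inclusion) on representatives. -/
def qmap {V : Type*} [AddCommGroup V] [Module ℂ V] {p p' q q' : Submodule ℂ V}
    (hp : p ≤ p') (hq : q ≤ q') : SubQuot p q →ₗ[ℂ] SubQuot p' q' :=
  Submodule.mapQ _ _ (Submodule.inclusion hp) fun x hx => by
    simp only [Submodule.mem_comap, Submodule.subtype_apply, Submodule.coe_inclusion] at hx ⊢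
    exact hq hx

section Cohomology

variable (U : ℤ → Type*) [∀ k, AddCommGroup (U k)] [∀ k, Module ℂ (U k)]
variable (D : ∀ k : ℤ, U k →ₗ[ℂ] U (k + 1)) (Db : ∀ k : ℤ, U k →ₗ[ℂ] U (k - 1))

/-- `H^k_∂ = (ker ∂ ∩ U^k)/∂(U^{k-1})` -/
abbrev Hd (k : ℤ) := SubQuot (kerD U D k) (imD U D k)

/-- `H^k_∂̄ = (ker ∂̄ ∩ U^k)/∂̄(U^{k+1})` -/
abbrev Hdb (k : ℤ) := SubQuot (kerDb U Db k) (imDb U Db k)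

/-- `H^k_BC = (ker ∂ ∩ ker ∂̄ ∩ U^k)/(∂∂̄)(U^k)` -/
abbrev HBC (k : ℤ) := SubQuot (kerD U D k ⊓ kerDb U Db k) (imDDbar U D Db k)

/-- `H^k_A = (ker (∂∂̄) ∩ U^k)/(∂(U^{k-1}) + ∂̄(U^{k+1}))` -/
abbrev HA (k : ℤ) := SubQuot (kerDDbar U D Db k) (imD U D k ⊔ imDb U Db k)

/-- `A^k = (∂(U^{k-1}) ∩ ∂̄(U^{k+1}))/(∂∂̄)(U^k)` -/
abbrev Avar (k : ℤ) := SubQuot (imD U D k ⊓ imDb U Db k) (imDDbar U D Db k)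

/-- `B^k = (ker ∂̄ ∩ ∂(U^{k-1}))/(∂∂̄)(U^k)` -/
abbrev Bvar (k : ℤ) := SubQuot (kerDb U Db k ⊓ imD U D k) (imDDbar U D Db k)

/-- `C^k = (ker (∂∂̄) ∩ U^k)/((ker ∂̄ ∩ U^k) + ∂(U^{k-1}))` -/
abbrev Cvar (k : ℤ) := SubQuot (kerDDbar U D Db k) (kerDb U Db k ⊔ imD U D k)

/-- `D^k = (ker ∂ ∩ ∂̄(U^{k+1}))/(∂∂̄)(U^k)` -/
abbrev Dvar (k : ℤ) := SubQuot (kerD U D k ⊓ imDb U Db k) (imDDbar U D Db k)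

/-- `E^k = (ker (∂∂̄) ∩ U^k)/((ker ∂ ∩ U^k) + ∂̄(U^{k+1}))` -/
abbrev Evar (k : ℤ) := SubQuot (kerDDbar U D Db k) (kerD U D k ⊔ imDb U Db k)

/-- `F^k = (ker (∂∂̄) ∩ U^k)/((ker ∂ ∩ U^k) + (ker ∂̄ ∩ U^k))` -/
abbrev Fvar (k : ℤ) := SubQuot (kerDDbar U D Db k) (kerD U D k ⊔ kerDb U Db k)

end Cohomology
section InducedMapLemmas

variable (U : ℤ → Type*) [∀ k, AddCommGroup (U k)] [∀ k, Module ℂ (U k)]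
variable (D : ∀ k : ℤ, U k →ₗ[ℂ] U (k + 1)) (Db : ∀ k : ℤ, U k →ₗ[ℂ] U (k - 1))

lemma Db_castU {a b : ℤ} (h : a = b) (x : U a) :
    Db b (castU U h x) = castU U (show a - 1 = b - 1 by rw [h]) (Db a x) := by
  subst h; rfl

lemma imDb_le_kerDb (hDb2 : ∀ k : ℤ, (Db (k - 1)).comp (Db k) = 0) (k : ℤ) :
    imDb U Db k ≤ kerDb U Db k := by
  rintro x ⟨y, rfl⟩
  have h0 : Db (k + 1 - 1) (Db (k + 1) y) = 0 := by
    simpa using DFunLike.congr_fun (hDb2 (k + 1)) y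
  simp only [kerDb, LinearMap.mem_ker, LinearMap.comp_apply, Db_castU, h0, map_zero]

lemma imDDbar_le_imDb
    (hanti : ∀ k : ℤ, ddbar U D Db k
      + (castU U (show k + 1 - 1 = k by ring)).comp ((Db (k + 1)).comp (D k)) = 0)
    (k : ℤ) : imDDbar U D Db k ≤ imDb U Db k := by
  rintro x ⟨y, rfl⟩
  refine ⟨-(D k y), ?_⟩
  have h := DFunLike.congr_fun (hanti k) y
  simp only [LinearMap.add_apply, LinearMap.comp_apply, LinearMap.zero_apply] at h
  simp only [LinearMap.comp_apply, map_neg]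
  exact neg_eq_of_add_eq_zero_left h

lemma kerDb_le_kerDDbar (k : ℤ) : kerDb U Db k ≤ kerDDbar U D Db k := by
  intro x hx
  have hx' : Db k x = 0 := hx
  simp only [kerDDbar, LinearMap.mem_ker, ddbar, LinearMap.comp_apply, hx', map_zero]

end InducedMapLemmas
section Maps

variable (U : ℤ → Type*) [∀ k, AddCommGroup (U k)] [∀ k, Module ℂ (U k)]
variable (D : ∀ k : ℤ, U k →ₗ[ℂ] U (k + 1)) (Db : ∀ k : ℤ, U k →ₗ[ℂ] U (k - 1))
variable (hDb2 : ∀ k : ℤ, (Db (k - 1)).comp (Db k) = 0)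
variable (hanti : ∀ k : ℤ, ddbar U D Db k
  + (castU U (show k + 1 - 1 = k by ring)).comp ((Db (k + 1)).comp (D k)) = 0)

/-- `A^k → B^k`, induced by the inclusion of representatives. -/
def mapAB (k : ℤ) : Avar U D Db k →ₗ[ℂ] Bvar U D Db k :=
  qmap (le_inf (inf_le_right.trans (imDb_le_kerDb U Db hDb2 k)) inf_le_left) le_rfl

/-- `B^k → H^k_∂̄`, induced by the inclusion of representatives. -/
def mapBH (k : ℤ) : Bvar U D Db k →ₗ[ℂ] Hdb U Db k :=
  qmap inf_le_left (imDDbar_le_imDb U D Db hanti k)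

/-- `H^k_∂̄ → H^k_A`, induced by the identity on representatives. -/
def mapHH (k : ℤ) : Hdb U Db k →ₗ[ℂ] HA U D Db k :=
  qmap (kerDb_le_kerDDbar U D Db k) le_sup_right

/-- `H^k_A → C^k`, induced by the quotient projection on representatives. -/
def mapHC (k : ℤ) : HA U D Db k →ₗ[ℂ] Cvar U D Db k :=
  qmap le_rfl (sup_le le_sup_right ((imDb_le_kerDb U Db hDb2 k).trans le_sup_left))

end Maps

/-!
Everything takes place among `im ∂` and the chain `im ∂∂̄ ≤ im ∂̄ ≤ ker ∂̄ ≤ ker ∂∂̄` of submodules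
of the single space `U^k`, and all four maps are induced by inclusions of representatives. For such
maps `p/q → p'/q' → p''/q''`, exactness at `p'/q'` is the lattice identity
`p' ⊓ q'' = p ⊔ p' ⊓ q'`. The required identities follow from the chain by absorption at `B^k` and
by the modular law at `H^k_∂̄` and `H^k_A`.
-/

section MapQ

variable {R M N P : Type*} [Ring R] [AddCommGroup M] [AddCommGroup N] [AddCommGroup P]
  [Module R M] [Module R N] [Module R P]
  {p : Submodule R M} {q : Submodule R N} {r : Submodule R P} {f : M →ₗ[R] N} {g : N →ₗ[R] P}

theorem mapQ_injective_iff (hf : p ≤ q.comap f) :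
    Function.Injective (p.mapQ q f hf) ↔ q.comap f ≤ p := by
  rw [← ker_eq_bot, ker_mapQ, eq_bot_iff, map_le_iff_le_comap, comap_bot, ker_mkQ]

theorem mapQ_surjective_iff (hf : p ≤ q.comap f) :
    Function.Surjective (p.mapQ q f hf) ↔ q ⊔ range f = ⊤ := by
  rw [← range_eq_top, range_mapQ, map_mkQ_eq_top]

theorem mapQ_exact_iff (hf : p ≤ q.comap f) (hg : q ≤ r.comap g) :
    Function.Exact (p.mapQ q f hf) (q.mapQ r g hg) ↔ r.comap g = q ⊔ range f := by
  rw [LinearMap.exact_iff, ker_mapQ, range_mapQ,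
    ← (comap_injective_of_surjective q.mkQ_surjective).eq_iff, comap_map_mkQ, comap_map_mkQ,
    sup_eq_right.2 hg]

end MapQ

section QMap

variable {V : Type*} [AddCommGroup V] [Module ℂ V] {p p' p'' q q' q'' : Submodule ℂ V}

theorem qmap_injective_iff (hp : p ≤ p') (hq : q ≤ q') :
    Function.Injective (qmap hp hq) ↔ p ⊓ q' ≤ q := by
  rw [qmap, mapQ_injective_iff, ← comap_comp, subtype_comp_inclusion, comap_subtype_le_iff,
    le_inf_iff, and_iff_right inf_le_left]

theorem qmap_surjective_iff (hp : p ≤ p') (hq : q ≤ q') :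
    Function.Surjective (qmap hp hq) ↔ p' ≤ p ⊔ q' := by
  rw [qmap, mapQ_surjective_iff, range_inclusion,
    ← (map_injective_of_injective p'.subtype_injective).eq_iff, Submodule.map_sup,
    map_comap_subtype, map_comap_subtype, map_subtype_top, inf_eq_right.2 hp,
    inf_sup_assoc_of_le _ hp, inf_eq_left, sup_comm]

theorem qmap_exact_iff (hp : p ≤ p') (hq : q ≤ q') (hp' : p' ≤ p'') (hq' : q' ≤ q'') :
    Function.Exact (qmap hp hq) (qmap hp' hq') ↔ p' ⊓ q'' = p ⊔ p' ⊓ q' := by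
  rw [qmap, qmap, mapQ_exact_iff, range_inclusion, ← comap_comp, subtype_comp_inclusion,
    ← (map_injective_of_injective p'.subtype_injective).eq_iff, Submodule.map_sup,
    map_comap_subtype, map_comap_subtype, map_comap_subtype, inf_eq_right.2 hp, sup_comm]

end QMap

theorem varouchas_exact_sequence_one_general
    (U : ℤ → Type*) [∀ k, AddCommGroup (U k)] [∀ k, Module ℂ (U k)]
    (D : ∀ k : ℤ, U k →ₗ[ℂ] U (k + 1)) (Db : ∀ k : ℤ, U k →ₗ[ℂ] U (k - 1))
    (hDb2 : ∀ k : ℤ, (Db (k - 1)).comp (Db k) = 0)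
    (hanti : ∀ k : ℤ, ddbar U D Db k
      + (castU U (show k + 1 - 1 = k by ring)).comp ((Db (k + 1)).comp (D k)) = 0)
    (k : ℤ) :
    Function.Injective ⇑(mapAB U D Db hDb2 k) ∧
    Function.Exact ⇑(mapAB U D Db hDb2 k) ⇑(mapBH U D Db hanti k) ∧
    Function.Exact ⇑(mapBH U D Db hanti k) ⇑(mapHH U D Db k) ∧
    Function.Exact ⇑(mapHH U D Db k) ⇑(mapHC U D Db hDb2 k) ∧
    Function.Surjective ⇑(mapHC U D Db hDb2 k) := by
  have him := imDDbar_le_imDb U D Db hanti k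
  have hDb := imDb_le_kerDb U Db hDb2 k
  have hker := kerDb_le_kerDDbar U D Db k
  refine ⟨(qmap_injective_iff _ _).2 inf_le_right, (qmap_exact_iff _ _ _ _).2 ?exact_B,
    (qmap_exact_iff _ _ _ _).2 ?exact_H, (qmap_exact_iff _ _ _ _).2 ?exact_HA,
    (qmap_surjective_iff _ _).2 le_sup_left⟩
  case exact_B =>
    calc
      kerDb U Db k ⊓ imD U D k ⊓ imDb U Db k
      _ = imD U D k ⊓ imDb U Db k := by
        rw [inf_assoc, inf_eq_right.2 (inf_le_right.trans hDb)]
      _ = imD U D k ⊓ imDb U Db k ⊔ kerDb U Db k ⊓ imD U D k ⊓ imDDbar U D Db k :=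
        (sup_eq_left.2 (inf_le_inf inf_le_right him)).symm
  case exact_H =>
    calc
      kerDb U Db k ⊓ (imD U D k ⊔ imDb U Db k)
      _ = kerDb U Db k ⊓ imD U D k ⊔ imDb U Db k := (inf_sup_assoc_of_le _ hDb).symm
      _ = kerDb U Db k ⊓ imD U D k ⊔ kerDb U Db k ⊓ imDb U Db k := by
        rw [inf_eq_right.2 hDb]
  case exact_HA =>
    calc
      kerDDbar U D Db k ⊓ (kerDb U Db k ⊔ imD U D k)
      _ = kerDDbar U D Db k ⊓ (kerDb U Db k ⊔ (imD U D k ⊔ imDb U Db k)) := by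
        rw [sup_left_comm, sup_eq_left.2 hDb, sup_comm]
      _ = kerDb U Db k ⊔ kerDDbar U D Db k ⊓ (imD U D k ⊔ imDb U Db k) := by
        rw [inf_comm, sup_inf_assoc_of_le _ hker, inf_comm]

/-- the Varouchas sequence `0 → A^k → B^k → H^k_∂̄ → H^k_A → C^k → 0`
is exact. -/
theorem varouchas_exact_sequence_one
    (n : ℕ) (U : ℤ → Type*) [∀ k, AddCommGroup (U k)] [∀ k, Module ℂ (U k)]
    (hvan : ∀ k : ℤ, (n : ℤ) < |k| → ∀ x : U k, x = 0)
    (D : ∀ k : ℤ, U k →ₗ[ℂ] U (k + 1)) (Db : ∀ k : ℤ, U k →ₗ[ℂ] U (k - 1))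
    (hD2 : ∀ k : ℤ, (D (k + 1)).comp (D k) = 0)
    (hDb2 : ∀ k : ℤ, (Db (k - 1)).comp (Db k) = 0)
    (hanti : ∀ k : ℤ, ddbar U D Db k
      + (castU U (show k + 1 - 1 = k by ring)).comp ((Db (k + 1)).comp (D k)) = 0)
    (k : ℤ) :
    Function.Injective ⇑(mapAB U D Db hDb2 k) ∧
    Function.Exact ⇑(mapAB U D Db hDb2 k) ⇑(mapBH U D Db hanti k) ∧
    Function.Exact ⇑(mapBH U D Db hanti k) ⇑(mapHH U D Db k) ∧
    Function.Exact ⇑(mapHH U D Db k) ⇑(mapHC U D Db hDb2 k) ∧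
    Function.Surjective ⇑(mapHC U D Db hDb2 k) :=
  varouchas_exact_sequence_one_general U D Db hDb2 hanti k
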